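/- For every ν ∈ (0,1), the relaxation response of the fractional modified Maxwell model exhibits ultra-slow (logarithmic) decay: Γ(1−ν) · (log(1+t))^ν · E_ν(−(log(1+t))^ν) → 1 as t → +∞. Equivalently, E_ν(−(log(1+t))^ν) ∼ (log(1+t))^{−ν}/Γ(1−ν) as t → ∞; in particular the relaxation response tends to 0 at infinity. -/

import Mathlib

open Real Filter

/-- The Mittag-Leffler function `E_ν(x) = ∑_{k=0}^∞ x^k / Γ(νk+1)`. -/
noncomputable def mittagLeffler (ν x : ℝ) : ℝ :=
  ∑' k : ℕ, x ^ k / Real.Gamma (ν * k + 1)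

open MeasureTheory intervalIntegral

theorem beta_real {a b t : ℝ} (ha : 0 < a) (hb : 0 < b) (ht : 0 < t) :
    ∫ x in (0:ℝ)..t, x ^ (b-1) * (t-x)^(a-1)
      = t^(a+b-1) * (Real.Gamma a * Real.Gamma b / Real.Gamma (a+b)) := by
  have h := Complex.betaIntegral_scaled b a ht
  rw [Complex.betaIntegral_eq_Gamma_mul_div _ _ (by simpa) (by simpa)] at h
  have e : ∫ x in (0:ℝ)..t, (x:ℂ) ^ ((b:ℂ)-1) * ((t:ℂ)-x)^((a:ℂ)-1)
      = ((∫ x in (0:ℝ)..t, x ^ (b-1) * (t-x)^(a-1) : ℝ) : ℂ) := by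
    rw [← intervalIntegral.integral_ofReal]
    apply intervalIntegral.integral_congr
    intro x hx
    rw [Set.uIcc_of_le ht.le] at hx
    simp only
    rw [Complex.ofReal_mul, Complex.ofReal_cpow hx.1, Complex.ofReal_cpow (by linarith [hx.2])]
    push_cast
    rfl
  rw [e] at h
  have e2 : ((t:ℂ) ^ ((b:ℂ)+a-1)) = ((t^(a+b-1) : ℝ) : ℂ) := by
    rw [Complex.ofReal_cpow ht.le]; push_cast; ring_nf
  rw [e2, ← Complex.ofReal_add, Complex.Gamma_ofReal, Complex.Gamma_ofReal,
    Complex.Gamma_ofReal] at h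
  norm_cast at h
  rw [h, mul_comm (Real.Gamma b), add_comm b a]

theorem beta_int {a b t : ℝ} (ha : 0 < a) (hb : 0 < b) (ht : 0 < t) :
    IntervalIntegrable (fun x => x ^ (b-1) * (t-x)^(a-1)) volume 0 t := by
  by_contra h
  have h1 := intervalIntegral.integral_undef h
  rw [beta_real ha hb ht] at h1
  have := Real.Gamma_pos_of_pos ha
  have := Real.Gamma_pos_of_pos hb
  have := Real.Gamma_pos_of_pos (add_pos ha hb)
  have : 0 < t^(a+b-1) * (Real.Gamma a * Real.Gamma b / Real.Gamma (a+b)) := by positivity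
  linarith

theorem gamma_lower {R y : ℝ} (hR : 1 ≤ R) (hy : 1 ≤ y) :
    R ^ (y-1) * exp (-(R+1)) ≤ Real.Gamma y := by
  rw [Real.Gamma_eq_integral (by linarith)]
  have hI := Real.GammaIntegral_convergent (s := y) (by linarith)
  have hsub : Set.Ioc R (R+1) ⊆ Set.Ioi 0 := fun x hx => by
    have := hx.1; simp only [Set.mem_Ioi]; linarith
  calc R ^ (y-1) * exp (-(R+1)) = ∫ x in Set.Ioc R (R+1), R ^ (y-1) * exp (-(R+1)) := by
        rw [← intervalIntegral.integral_of_le (by linarith)]; simp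
    _ ≤ ∫ x in Set.Ioc R (R+1), exp (-x) * x ^ (y-1) := by
        apply setIntegral_mono_on (integrableOn_const (by simp) enorm_ne_top) (hI.mono_set hsub) measurableSet_Ioc
        intro x hx
        rw [mul_comm]
        have := hx.1
        have h2 := hx.2
        gcongr
    _ ≤ _ := by
        apply setIntegral_mono_set hI
        · rw [Filter.EventuallyLE, ae_restrict_iff' measurableSet_Ioi]
          refine Eventually.of_forall fun x hx => ?_
          have : 0 < x := hx
          simp only [Pi.zero_apply]
          positivity
        · exact Eventually.of_forall hsub

theorem ml_summable {ν b : ℝ} (hν : 0 < ν) (x : ℝ) :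
    Summable (fun k : ℕ => |x| ^ k / Real.Gamma (ν * k + b)) := by
  set R : ℝ := (2 * |x| + 1) ^ (1/ν) with hR
  have hx := abs_nonneg x
  have hR1 : 1 ≤ R := Real.one_le_rpow (by linarith) (by positivity)
  have hRp : 0 < R := by linarith
  have hRν : R ^ ν = 2 * |x| + 1 := by
    rw [hR, ← Real.rpow_mul (by linarith)]
    field_simp
    simp
  have hq : |x| / R^ν < 1 := by
    rw [hRν, div_lt_one (by linarith)]; linarith
  have hs := (summable_geometric_of_lt_one (by positivity) hq).mul_left
    (R ^ (1 - b) * exp (R+1))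
  obtain ⟨N, hN⟩ := exists_nat_gt ((1 - b)/ν)
  refine summable_of_isBigO_nat hs (Asymptotics.IsBigO.of_bound 1 ?_)
  filter_upwards [eventually_ge_atTop N] with k hk
  have hk' : 1 ≤ ν * k + b := by
    have : (N:ℝ) ≤ k := by exact_mod_cast hk
    have : (1-b)/ν < k := by linarith
    rw [div_lt_iff₀ hν] at this
    linarith
  have hg := gamma_lower hR1 hk'
  have hgp : 0 < R ^ (ν * k + b -1) * exp (-(R+1)) := by positivity
  rw [one_mul, Real.norm_of_nonneg (div_nonneg (by positivity) (by linarith)),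
    Real.norm_of_nonneg (by positivity)]
  calc |x| ^ k / Real.Gamma (ν * k + b) ≤ |x|^k / (R ^ (ν * k + b -1) * exp (-(R+1))) := by
        gcongr
    _ = _ := by
        rw [div_pow, ← Real.rpow_natCast (R^ν), ← Real.rpow_mul hRp.le, Real.exp_neg,
          show ν * k + b - 1 = ν * k - (1-b) by ring, Real.rpow_sub hRp]
        field_simp

noncomputable def mlG (ν b x : ℝ) : ℝ := ∑' k : ℕ, x ^ k / Real.Gamma (ν * k + b)

theorem ml_hasSum {ν b : ℝ} (hν : 0 < ν) (x : ℝ) :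
    HasSum (fun k : ℕ => x ^ k / Real.Gamma (ν * k + b)) (mlG ν b x) := by
  apply Summable.hasSum
  have h := (ml_summable (b := b) hν x).norm
  refine Summable.of_norm ?_
  convert h using 2 with k
  simp

theorem ml_cont {ν b : ℝ} (hν : 0 < ν) : Continuous (mlG ν b) := by
  rw [continuous_iff_continuousAt]
  intro x
  have : ContinuousOn (mlG ν b) (Set.Icc (-(|x|+1)) (|x|+1)) := by
    unfold mlG
    apply continuousOn_tsum (u := fun k : ℕ => ‖|(|x|+1)| ^ k / Real.Gamma (ν * k + b)‖)
    · intro k; fun_prop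
    · exact (ml_summable (b := b) hν (|x|+1)).norm
    · intro k y hy
      rw [norm_div, norm_div]
      gcongr
      simp only [norm_pow, Real.norm_eq_abs, abs_abs]
      rw [abs_of_nonneg (a := |x|+1) (by positivity)]
      exact pow_le_pow_left₀ (abs_nonneg y) (abs_le.2 hy) k
  apply this.continuousAt
  apply Icc_mem_nhds
  · linarith [neg_abs_le x]
  · linarith [le_abs_self x]

theorem ml_zero {ν b : ℝ} : mlG ν b 0 = 1 / Real.Gamma b := by
  unfold mlG
  rw [tsum_eq_single 0]
  · simp
  · intro k hk; simp [hk]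

theorem ml_shift {ν b : ℝ} (hν : 0 < ν) (x : ℝ) :
    mlG ν b x = 1 / Real.Gamma b + x * mlG ν (b+ν) x := by
  have h := (ml_hasSum (b := b) hν x).summable.tsum_eq_zero_add
  unfold mlG
  rw [h, ← tsum_mul_left]
  simp only [pow_zero, Nat.cast_zero, mul_zero, zero_add]
  congr 1
  congr 1
  ext k
  rw [pow_succ]; push_cast
  rw [show ν * (k+1) + b = ν * k + (b+ν) by ring]
  ring

noncomputable def mlF (ν b t : ℝ) : ℝ := t^(b-1) * mlG ν b (-t^ν)

theorem mlF_shift {ν b t : ℝ} (hν : 0 < ν) (ht : 0 < t) :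
    mlF ν b t = t^(b-1) / Real.Gamma b - mlF ν (b+ν) t := by
  unfold mlF
  rw [ml_shift hν, show b + ν - 1 = b - 1 + ν by ring, Real.rpow_add ht]
  ring

theorem cont_aux {ν b : ℝ} (hν : 0 < ν) : Continuous (fun t : ℝ => mlG ν b (-t^ν)) := by
  refine (ml_cont hν).comp ?_
  exact (Real.continuous_rpow_const hν.le).neg

theorem mlF_contOn {ν b : ℝ} (hν : 0 < ν) : ContinuousOn (mlF ν b) (Set.Ioi 0) := by
  unfold mlF
  refine ContinuousOn.mul ?_ (cont_aux hν).continuousOn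
  intro x hx
  exact (Real.continuousAt_rpow_const _ _ (Or.inl (ne_of_gt hx))).continuousWithinAt

theorem mlF_int {ν a b t : ℝ} (hν : 0 < ν) (ha : 0 < a) (hb : 0 < b) (ht : 0 < t) :
    IntervalIntegrable (fun s => mlF ν b s * (t-s)^(a-1)) volume 0 t := by
  have := (beta_int ha hb ht).mul_continuousOn (g := fun t : ℝ => mlG ν b (-t^ν))
    (cont_aux hν).continuousOn
  convert this using 2 with s
  unfold mlF; ring

theorem mlF_conv {ν a b t : ℝ} (hν : 0 < ν) (ha : 0 < a) (hb : 0 < b) (ht : 0 < t) :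
    ∫ s in (0:ℝ)..t, mlF ν b s * (t-s)^(a-1) = Real.Gamma a * mlF ν (a+b) t := by
  have hpos : ∀ k : ℕ, 0 < ν * k + b := fun k => by positivity
  have hk1 : ∀ k : ℕ, Real.Gamma (ν * k + b) ≠ 0 := fun k => (Real.Gamma_pos_of_pos (hpos k)).ne'
  let f : ℕ → ℝ → ℝ := fun k s =>
    ((-1)^k / Real.Gamma (ν * k + b)) * (s ^ (ν * k + b - 1) * (t-s)^(a-1))
  have hf : ∀ k, Integrable (f k) (volume.restrict (Set.Ioc 0 t)) := fun k => by
    have := (beta_int ha (hpos k) ht).const_mul ((-1)^k / Real.Gamma (ν * k + b))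
    rwa [intervalIntegrable_iff_integrableOn_Ioc_of_le ht.le] at this
  have hpw : ∀ k : ℕ, t ^ (a + (ν * k + b) - 1) = t^(a+b-1) * (t^ν)^k := fun k => by
    rw [← Real.rpow_natCast, ← Real.rpow_mul ht.le, ← Real.rpow_add ht]; ring_nf
  have hval : ∀ k, ∫ s in Set.Ioc 0 t, f k s
      = Real.Gamma a * t^(a+b-1) * ((-t^ν)^k / Real.Gamma (ν * k + (a+b))) := fun k => by
    rw [← intervalIntegral.integral_of_le ht.le]
    simp only [f]
    rw [intervalIntegral.integral_const_mul, beta_real ha (hpos k) ht, hpw,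
      show ν * k + (a+b) = a + (ν * k + b) by ring, neg_pow (t^ν)]
    have := hk1 k
    field_simp
  have hnorm : ∀ k, ∫ s in Set.Ioc 0 t, ‖f k s‖
      = Real.Gamma a * t^(a+b-1) * (|t^ν|^k / Real.Gamma (ν * k + (a+b))) := fun k => by
    have : ∫ s in Set.Ioc 0 t, ‖f k s‖ = ∫ s in Set.Ioc 0 t,
       (1 / Real.Gamma (ν * k + b)) * (s ^ (ν * k + b - 1) * (t-s)^(a-1)) := by
      apply setIntegral_congr_fun measurableSet_Ioc
      intro s hs
      have h1 : 0 ≤ s ^ (ν * k + b - 1) := Real.rpow_nonneg hs.1.le _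
      have h2 : 0 ≤ (t-s)^(a-1) := Real.rpow_nonneg (by linarith [hs.2]) _
      simp only [f]
      rw [norm_mul, norm_div, norm_pow, norm_neg, norm_one, one_pow,
        Real.norm_of_nonneg (Real.Gamma_pos_of_pos (hpos k)).le,
        Real.norm_of_nonneg (mul_nonneg h1 h2)]
    rw [this, ← intervalIntegral.integral_of_le ht.le]
    rw [intervalIntegral.integral_const_mul, beta_real ha (hpos k) ht, hpw,
      show ν * k + (a+b) = a + (ν * k + b) by ring, abs_of_nonneg (by positivity)]
    have := hk1 k
    field_simp
  have hS : Summable fun k => ∫ s in Set.Ioc 0 t, ‖f k s‖ := by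
    simp_rw [hnorm]
    exact (ml_summable hν _).mul_left _
  have H := hasSum_integral_of_summable_integral_norm hf hS
  simp_rw [hval] at H
  have H2 := (ml_hasSum (b := a+b) hν (-t^ν)).mul_left (Real.Gamma a * t^(a+b-1))
  have H3 := H.unique H2
  rw [intervalIntegral.integral_of_le ht.le]
  unfold mlF
  rw [← mul_assoc, ← H3]
  apply setIntegral_congr_fun measurableSet_Ioc
  intro s hs
  simp only [mlG, f]
  rw [← tsum_mul_left, ← tsum_mul_right]
  congr 1
  ext k
  have : s ^ (ν * k + b - 1) = s^(b-1) * (s^ν)^k := by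
    rw [← Real.rpow_natCast, ← Real.rpow_mul hs.1.le, ← Real.rpow_add hs.1]; ring_nf
  rw [this, neg_pow (s^ν)]
  ring

theorem r_eq {ν t : ℝ} (hν : 0 < ν) (ht : 0 < t) :
    ∫ s in (0:ℝ)..t, mlF ν ν s * (t-s)^(ν-1) = t^(ν-1) - Real.Gamma ν * mlF ν ν t := by
  rw [mlF_conv hν hν hν ht, mlF_shift (b := ν) hν ht]
  have := (Real.Gamma_pos_of_pos hν).ne'
  field_simp
  ring

theorem int_pow {a t s : ℝ} (ha : 0 < a) :
    ∫ x in s..t, (t-x)^(a-1) = (t-s)^a / a := by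
  rw [intervalIntegral.integral_comp_sub_left (fun x => x^(a-1)) t, integral_rpow (Or.inl (by linarith))]
  simp [ha.ne']

theorem int_pow_int {a t s s' : ℝ} (ha : 0 < a) :
    IntervalIntegrable (fun x => (t-x)^(a-1)) volume s s' := by
  have := (intervalIntegral.intervalIntegrable_rpow' (a := t - s) (b := t - s')
    (r := a - 1) (by linarith)).comp_sub_left t
  simpa using this

theorem r_nonneg {ν : ℝ} (hν : 0 < ν) (hν1 : ν < 1) {t : ℝ} (ht : 0 < t) : 0 ≤ mlF ν ν t := by
  have hG := Real.Gamma_pos_of_pos hν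
  by_contra hneg
  push Not at hneg
  have hcont := cont_aux (b := ν) hν
  -- first zero
  obtain ⟨t0, ⟨⟨h0, h01⟩, h0z⟩, hmin⟩ : ∃ x, IsLeast (Set.Icc 0 t ∩ {s | mlG ν ν (-s^ν) ≤ 0}) x := by
    apply IsCompact.exists_isLeast
    · exact isCompact_Icc.inter_right (isClosed_le hcont continuous_const)
    · refine ⟨t, ⟨ht.le, le_rfl⟩, ?_⟩
      by_contra hh
      simp only [Set.mem_ofPred_eq, not_le] at hh
      have : 0 < mlF ν ν t := by unfold mlF; positivity
      linarith
  have ht0 : 0 < t0 := by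
    rcases h0.eq_or_lt with h | h
    · simp only [Set.mem_ofPred_eq, ← h, Real.zero_rpow hν.ne', neg_zero, ml_zero] at h0z
      have : 0 < 1 / Real.Gamma ν := by positivity
      linarith
    · exact h
  have hpos : ∀ s, 0 < s → s < t0 → 0 < mlF ν ν s := by
    intro s hs hs0
    have : 0 < mlG ν ν (-s^ν) := by
      by_contra hh
      push Not at hh
      have := hmin ⟨⟨hs.le, by linarith⟩, hh⟩
      linarith
    unfold mlF; positivity
  have hr0 : mlF ν ν t0 ≤ 0 := by
    unfold mlF
    exact mul_nonpos_of_nonneg_of_nonpos (by positivity) h0z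
  -- choose τ
  obtain ⟨τ, ⟨hτ1, hτ2⟩, hτ3, hτ4⟩ : ∃ τ, (0 < τ ∧ τ < t0) ∧ (t0-τ)^ν/ν < Real.Gamma ν / 4 ∧
      1/2 < (t0/τ)^(ν-1) := by
    have e1 : Tendsto (fun τ => (t0-τ)^ν/ν) (nhdsWithin t0 (Set.Iio t0)) (nhds ((t0-t0)^ν/ν)) := by
      apply Tendsto.mono_left _ nhdsWithin_le_nhds
      have : Continuous (fun τ => (t0-τ)^ν/ν) :=
        ((Real.continuous_rpow_const hν.le).comp (continuous_const.sub continuous_id)).div_const _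
      exact this.tendsto t0
    have e2 : Tendsto (fun τ => (t0/τ)^(ν-1)) (nhdsWithin t0 (Set.Iio t0)) (nhds ((t0/t0)^(ν-1))) := by
      apply Tendsto.mono_left _ nhdsWithin_le_nhds
      apply Tendsto.rpow_const
      · exact tendsto_const_nhds.div tendsto_id ht0.ne'
      · left; rw [div_self ht0.ne']; norm_num
    rw [sub_self, Real.zero_rpow hν.ne', zero_div] at e1
    rw [div_self ht0.ne', Real.one_rpow] at e2
    have e3 : ∀ᶠ τ in nhdsWithin t0 (Set.Iio t0), 0 < τ ∧ τ < t0 := Ioo_mem_nhdsLT ht0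
    exact (e3.and ((e1.eventually_lt_const (by positivity)).and
      (e2.eventually_const_lt (by norm_num)))).exists
  obtain ⟨p, ⟨hp1, hp2⟩, hpmax⟩ := isCompact_Icc.exists_isMaxOn (Set.nonempty_Icc.2 hτ2.le)
    ((mlF_contOn (b := ν) hν).mono (fun x (hx : x ∈ Set.Icc τ t0) => lt_of_lt_of_le hτ1 hx.1))
  have hrp : 0 < mlF ν ν p := lt_of_lt_of_le (hpos τ hτ1 hτ2) (hpmax ⟨le_rfl, hτ2.le⟩)
  have hpt : p < t0 := by
    rcases hp2.eq_or_lt with h | h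
    · rw [h] at hrp; linarith
    · exact h
  have hp0 : 0 < p := by linarith
  set c := (t0/p)^(ν-1) with hc
  have hc2 : 1/2 < c := by
    refine hτ4.trans_le ?_
    apply Real.rpow_le_rpow_of_nonpos (by positivity) _ (by linarith)
    gcongr
  have hint := mlF_int hν hν hν ht0
  have hint1 : IntervalIntegrable (fun s => mlF ν ν s * (t0-s)^(ν-1)) volume 0 p :=
    hint.mono_set (by rw [Set.uIcc_of_le hp0.le, Set.uIcc_of_le ht0.le]; exact Set.Icc_subset_Icc_right hp2)
  have hint2 : IntervalIntegrable (fun s => mlF ν ν s * (t0-s)^(ν-1)) volume p t0 :=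
    hint.mono_set (by rw [Set.uIcc_of_le hp2, Set.uIcc_of_le ht0.le]; exact Set.Icc_subset_Icc_left hp0.le)
  have hI1 : ∫ s in (0:ℝ)..p, mlF ν ν s * (t0-s)^(ν-1) ≤ t0^(ν-1) - c * (Real.Gamma ν * mlF ν ν p) := by
    have hm : ∫ s in (0:ℝ)..p, mlF ν ν s * (t0-s)^(ν-1)
        ≤ ∫ s in (0:ℝ)..p, c * (mlF ν ν s * (p-s)^(ν-1)) := by
      apply intervalIntegral.integral_mono_on_of_le_Ioo hp0.le hint1 ((mlF_int hν hν hν hp0).const_mul c)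
      intro s hs
      have h1 := hpos s hs.1 (hs.2.trans hpt)
      have h2 : (t0-s)^(ν-1) ≤ c * (p-s)^(ν-1) := by
        have hps : 0 < p - s := by linarith [hs.2]
        rw [hc, ← Real.mul_rpow (by positivity) hps.le]
        apply Real.rpow_le_rpow_of_nonpos (by positivity) _ (by linarith)
        rw [div_mul_eq_mul_div, div_le_iff₀ hp0]
        nlinarith [hs.1]
      calc _ ≤ mlF ν ν s * (c * (p-s)^(ν-1)) := by gcongr
        _ = _ := by ring
    rw [intervalIntegral.integral_const_mul, r_eq hν hp0, mul_sub] at hm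
    have : c * p^(ν-1) = t0^(ν-1) := by
      rw [hc, ← Real.mul_rpow (by positivity) hp0.le, div_mul_cancel₀ _ hp0.ne']
    linarith
  have hI2 : ∫ s in p..t0, mlF ν ν s * (t0-s)^(ν-1) ≤ mlF ν ν p * (Real.Gamma ν / 4) := by
    have hm : ∫ s in p..t0, mlF ν ν s * (t0-s)^(ν-1) ≤ ∫ s in p..t0, mlF ν ν p * (t0-s)^(ν-1) := by
      apply intervalIntegral.integral_mono_on hp2 hint2 ((int_pow_int hν).const_mul _)
      intro s hs
      have h1 : mlF ν ν s ≤ mlF ν ν p := hpmax ⟨by linarith [hs.1], hs.2⟩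
      have h2 : 0 ≤ (t0-s)^(ν-1) := Real.rpow_nonneg (by linarith [hs.2]) _
      gcongr
    rw [intervalIntegral.integral_const_mul, int_pow hν] at hm
    refine hm.trans ?_
    have : (t0-p)^ν/ν ≤ (t0-τ)^ν/ν := by
      have : 0 ≤ t0 - p := by linarith
      gcongr
    exact mul_le_mul_of_nonneg_left (this.trans hτ3.le) hrp.le
  have htot := intervalIntegral.integral_add_adjacent_intervals hint1 hint2
  rw [r_eq hν ht0] at htot
  have h5 : Real.Gamma ν * mlF ν ν t0 ≤ 0 := mul_nonpos_of_nonneg_of_nonpos hG.le hr0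
  have h6 : 0 < Real.Gamma ν * mlF ν ν p := by positivity
  nlinarith

section main
variable {ν : ℝ} (hν : 0 < ν) (hν1 : ν < 1)
include hν

theorem r_int {t : ℝ} (ht : 0 < t) : IntervalIntegrable (mlF ν ν) volume 0 t := by
  simpa using mlF_int (a := 1) hν one_pos hν ht

theorem u_int {t : ℝ} (ht : 0 < t) : IntervalIntegrable (mlF ν 1) volume 0 t := by
  simpa using mlF_int (a := 1) hν one_pos one_pos ht

theorem u_eq {t : ℝ} (ht : 0 < t) : ∫ s in (0:ℝ)..t, mlF ν ν s = 1 - mlF ν 1 t := by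
  have := mlF_conv (a := 1) hν one_pos hν ht
  simp only [sub_self, Real.rpow_zero, mul_one, Real.Gamma_one, one_mul] at this
  rw [this, mlF_shift (b := 1) hν ht]
  simp

theorem u_vol {t : ℝ} (ht : 0 < t) :
    ∫ s in (0:ℝ)..t, mlF ν 1 s * (t-s)^(ν-1) = Real.Gamma ν * (1 - mlF ν 1 t) := by
  rw [mlF_conv hν hν one_pos ht, mlF_shift (b := 1) hν ht]
  simp [add_comm]

include hν1

theorem r_int_nonneg {s t : ℝ} (hs : 0 ≤ s) (h : s ≤ t) : 0 ≤ ∫ x in s..t, mlF ν ν x := by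
  rw [intervalIntegral.integral_of_le h]
  apply setIntegral_nonneg measurableSet_Ioc
  intro x hx
  exact r_nonneg hν hν1 (by linarith [hx.1])

theorem u_anti {s t : ℝ} (hs : 0 < s) (h : s ≤ t) : mlF ν 1 t ≤ mlF ν 1 s := by
  have h1 := u_eq hν hs
  have h2 := u_eq hν (hs.trans_le h)
  have h3 := intervalIntegral.integral_interval_sub_left (r_int hν (hs.trans_le h)) (r_int hν hs)
  have h4 := r_int_nonneg hν hν1 hs.le h
  linarith

theorem u_le_one {t : ℝ} (ht : 0 < t) : mlF ν 1 t ≤ 1 := by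
  have h1 := u_eq hν ht
  have h4 := r_int_nonneg hν hν1 le_rfl ht.le
  linarith

theorem u_nonneg {T : ℝ} (hT : 0 < T) : 0 ≤ mlF ν 1 T := by
  by_contra hneg
  push Not at hneg
  obtain ⟨c, hc⟩ : ∃ c, c = - mlF ν 1 T := ⟨_, rfl⟩
  have hc0 : 0 < c := by linarith
  obtain ⟨x, hx, hx0⟩ := (((tendsto_rpow_atTop hν).eventually_gt_atTop (T^ν / c)).and
    (eventually_gt_atTop 0)).exists
  rw [div_lt_iff₀ hc0] at hx
  have ht : 0 < T + x := by positivity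
  have hint := mlF_int hν hν one_pos ht
  have hint1 : IntervalIntegrable (fun s => mlF ν 1 s * (T+x-s)^(ν-1)) volume 0 T :=
    hint.mono_set (by rw [Set.uIcc_of_le hT.le, Set.uIcc_of_le ht.le]; exact Set.Icc_subset_Icc_right (by linarith))
  have hint2 : IntervalIntegrable (fun s => mlF ν 1 s * (T+x-s)^(ν-1)) volume T (T+x) :=
    hint.mono_set (by rw [Set.uIcc_of_le (by linarith), Set.uIcc_of_le ht.le]; exact Set.Icc_subset_Icc_left hT.le)
  have htot := intervalIntegral.integral_add_adjacent_intervals hint1 hint2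
  rw [u_vol hν ht] at htot
  have hp0 : 0 ≤ Real.Gamma ν * (1 - mlF ν 1 (T+x)) :=
    mul_nonneg (Real.Gamma_pos_of_pos hν).le (by linarith [u_le_one hν hν1 ht])
  have hI1 : ∫ s in (0:ℝ)..T, mlF ν 1 s * (T+x-s)^(ν-1) ≤ ∫ s in (0:ℝ)..T, (T+x-s)^(ν-1) := by
    apply intervalIntegral.integral_mono_on_of_le_Ioo hT.le hint1 (int_pow_int hν)
    intro s hs
    have h2 : 0 ≤ (T+x-s)^(ν-1) := Real.rpow_nonneg (by linarith [hs.2]) _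
    have := u_le_one hν hν1 hs.1
    nlinarith
  have hI2 : ∫ s in T..(T+x), mlF ν 1 s * (T+x-s)^(ν-1) ≤ ∫ s in T..(T+x), (-c) * (T+x-s)^(ν-1) := by
    apply intervalIntegral.integral_mono_on_of_le_Ioo (by linarith) hint2 ((int_pow_int hν).const_mul _)
    intro s hs
    have h2 : 0 ≤ (T+x-s)^(ν-1) := Real.rpow_nonneg (by linarith [hs.2]) _
    have := u_anti hν hν1 hT hs.1.le
    rw [hc, neg_neg]
    gcongr
  have e1 : ∫ s in (0:ℝ)..T, (T+x-s)^(ν-1) = (T+x)^ν/ν - x^ν/ν := by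
    have h := intervalIntegral.integral_add_adjacent_intervals
      (int_pow_int (t := T+x) (s := 0) (s' := T) hν) (int_pow_int (t := T+x) (s := T) (s' := T+x) hν)
    rw [int_pow hν, int_pow hν] at h
    simp only [sub_zero, add_sub_cancel_left] at h
    linarith
  rw [e1] at hI1
  rw [intervalIntegral.integral_const_mul, int_pow hν, add_sub_cancel_left] at hI2
  have hsub := Real.rpow_add_le_add_rpow hT.le hx0.le hν.le hν1.le
  have : (T+x)^ν/ν ≤ (T^ν + x^ν)/ν := by gcongr
  have h7 : T^ν/ν < x^ν * c/ν := by gcongr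
  rw [add_div] at this
  have h8 : -c * (x^ν/ν) = - (x^ν*c/ν) := by ring
  linarith

theorem u_upper {t : ℝ} (ht : 0 < t) : mlF ν 1 t ≤ Real.Gamma ν * ν / t^ν := by
  have hG := Real.Gamma_pos_of_pos hν
  have h : ∫ s in (0:ℝ)..t, mlF ν 1 t * (t-s)^(ν-1) ≤ ∫ s in (0:ℝ)..t, mlF ν 1 s * (t-s)^(ν-1) := by
    apply intervalIntegral.integral_mono_on_of_le_Ioo ht.le ((int_pow_int hν).const_mul _)
      (mlF_int hν hν one_pos ht)
    intro s hs
    have h2 : 0 ≤ (t-s)^(ν-1) := Real.rpow_nonneg (by linarith [hs.2]) _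
    have := u_anti hν hν1 hs.1 hs.2.le
    gcongr
  rw [u_vol hν ht, intervalIntegral.integral_const_mul, int_pow hν, sub_zero] at h
  have hu := u_nonneg hν hν1 ht
  have htp : 0 < t^ν := by positivity
  rw [le_div_iff₀ htp]
  have : mlF ν 1 t * (t^ν/ν) ≤ Real.Gamma ν := by nlinarith
  rw [← mul_div_assoc, div_le_iff₀ hν] at this
  exact this

theorem u_tendsto : Tendsto (mlF ν 1) atTop (nhds 0) := by
  refine tendsto_of_tendsto_of_tendsto_of_le_of_le' tendsto_const_nhds
    ((tendsto_rpow_atTop hν).const_div_atTop (Real.Gamma ν * ν)) ?_ ?_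
  · filter_upwards [eventually_gt_atTop 0] with t ht using u_nonneg hν hν1 ht
  · filter_upwards [eventually_gt_atTop 0] with t ht using u_upper hν hν1 ht

theorem w_lower {t : ℝ} (ht : 0 < t) :
    1 - mlF ν 1 t ≤ Real.Gamma (1-ν) * t^ν * mlF ν 1 t := by
  have h1 := mlF_conv (a := 1 - ν) hν (by linarith) hν ht
  rw [sub_add_cancel] at h1
  have h : ∫ s in (0:ℝ)..t, t^(-ν) * mlF ν ν s ≤ ∫ s in (0:ℝ)..t, mlF ν ν s * (t-s)^(1-ν-1) := by
    apply intervalIntegral.integral_mono_on_of_le_Ioo ht.le ((r_int hν ht).const_mul _)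
      (mlF_int hν (by linarith) hν ht)
    intro s hs
    have h2 : t^(-ν) ≤ (t-s)^(1-ν-1) := by
      rw [show 1 - ν - 1 = -ν by ring]
      exact Real.rpow_le_rpow_of_nonpos (by linarith [hs.2]) (by linarith [hs.1]) (by linarith)
    have := r_nonneg hν hν1 hs.1
    rw [mul_comm]
    gcongr
  rw [intervalIntegral.integral_const_mul, u_eq hν ht, h1, Real.rpow_neg ht.le] at h
  have htp : 0 < t^ν := by positivity
  calc 1 - mlF ν 1 t = t^ν * ((t^ν)⁻¹ * (1 - mlF ν 1 t)) := by field_simp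
    _ ≤ t^ν * (Real.Gamma (1-ν) * mlF ν 1 t) := by gcongr
    _ = _ := by ring

theorem V_upper {t : ℝ} (ht : 0 < t) :
    Real.Gamma (2-ν) * mlF ν 2 t ≤ t^(1-ν) := by
  have h1 := mlF_conv (a := 2 - ν) hν (by linarith) hν ht
  rw [sub_add_cancel] at h1
  have h : ∫ s in (0:ℝ)..t, mlF ν ν s * (t-s)^(2-ν-1) ≤ ∫ s in (0:ℝ)..t, t^(1-ν) * mlF ν ν s := by
    apply intervalIntegral.integral_mono_on_of_le_Ioo ht.le
      (mlF_int hν (by linarith) hν ht) ((r_int hν ht).const_mul _)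
    intro s hs
    have h2 : (t-s)^(2-ν-1) ≤ t^(1-ν) := by
      rw [show 2 - ν - 1 = 1-ν by ring]
      exact Real.rpow_le_rpow (by linarith [hs.2]) (by linarith [hs.1]) (by linarith)
    have := r_nonneg hν hν1 hs.1
    rw [mul_comm]
    gcongr
  rw [intervalIntegral.integral_const_mul, u_eq hν ht, h1] at h
  have hu := u_nonneg hν hν1 ht
  have : 0 < t^(1-ν) := by positivity
  nlinarith

theorem V_lower {x y : ℝ} (hx : 0 < x) (hxy : x < y) :
    (y-x)^(1-ν) * (1 - mlF ν 1 x) ≤ Real.Gamma (2-ν) * mlF ν 2 y := by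
  have hy := hx.trans hxy
  have h1 := mlF_conv (a := 2 - ν) hν (by linarith) hν hy
  rw [sub_add_cancel] at h1
  have hint := mlF_int (a := 2 - ν) hν (by linarith) hν hy
  have hint1 : IntervalIntegrable (fun s => mlF ν ν s * (y-s)^(2-ν-1)) volume 0 x :=
    hint.mono_set (by rw [Set.uIcc_of_le hx.le, Set.uIcc_of_le hy.le]; exact Set.Icc_subset_Icc_right hxy.le)
  have hint2 : IntervalIntegrable (fun s => mlF ν ν s * (y-s)^(2-ν-1)) volume x y :=
    hint.mono_set (by rw [Set.uIcc_of_le hxy.le, Set.uIcc_of_le hy.le]; exact Set.Icc_subset_Icc_left hx.le)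
  have htot := intervalIntegral.integral_add_adjacent_intervals hint1 hint2
  have h3 : 0 ≤ ∫ s in x..y, mlF ν ν s * (y-s)^(2-ν-1) := by
    apply intervalIntegral.integral_nonneg hxy.le
    intro s hs
    exact mul_nonneg (r_nonneg hν hν1 (by linarith [hs.1])) (Real.rpow_nonneg (by linarith [hs.2]) _)
  have h : ∫ s in (0:ℝ)..x, (y-x)^(1-ν) * mlF ν ν s ≤ ∫ s in (0:ℝ)..x, mlF ν ν s * (y-s)^(2-ν-1) := by
    apply intervalIntegral.integral_mono_on_of_le_Ioo hx.le ((r_int hν hx).const_mul _) hint1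
    intro s hs
    have h2 : (y-x)^(1-ν) ≤ (y-s)^(2-ν-1) := by
      rw [show 2 - ν - 1 = 1-ν by ring]
      exact Real.rpow_le_rpow (by linarith [hs.2]) (by linarith [hs.2]) (by linarith)
    have := r_nonneg hν hν1 hs.1
    rw [mul_comm]
    gcongr
  rw [intervalIntegral.integral_const_mul, u_eq hν hx] at h
  linarith

theorem w_upper {a e t : ℝ} (he : 0 < e) (hea : e < a) (ha : a < 1) (ht : 0 < t) :
    (1-ν) * (1-a) * (Real.Gamma (1-ν) * t^ν * mlF ν 1 t)
      ≤ 1 - (a-e)^(1-ν) * (1 - mlF ν 1 (e*t)) := by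
  have h2 : ∀ t, 0 < t → ∫ s in (0:ℝ)..t, mlF ν 1 s = mlF ν 2 t := by
    intro t ht
    have := mlF_conv (a := 1) hν one_pos one_pos ht
    simp only [sub_self, Real.rpow_zero, mul_one, Real.Gamma_one, one_mul] at this
    rw [this]; norm_num
  have ha0 : 0 < a := he.trans hea
  have hat : 0 < a * t := by positivity
  have hatt : a * t ≤ t := by nlinarith
  have h3 := intervalIntegral.integral_interval_sub_left (u_int hν ht) (u_int hν hat)
  rw [h2 _ ht, h2 _ hat] at h3
  have h4 : ∫ s in (a*t)..t, mlF ν 1 t ≤ ∫ s in (a*t)..t, mlF ν 1 s := by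
    apply intervalIntegral.integral_mono_on_of_le_Ioo hatt (by simp)
    · exact (u_int hν ht).mono_set (by rw [Set.uIcc_of_le hatt, Set.uIcc_of_le ht.le]; exact Set.Icc_subset_Icc_left hat.le)
    · intro s hs
      exact u_anti hν hν1 (by linarith [hs.1]) hs.2.le
  rw [intervalIntegral.integral_const, smul_eq_mul, ← h3] at h4
  have h5 := V_upper hν hν1 ht
  have h6 := V_lower hν hν1 (x := e*t) (y := a*t) (by positivity) (by gcongr)
  rw [← sub_mul, Real.mul_rpow (by linarith) ht.le] at h6
  have hG : Real.Gamma (2-ν) = (1-ν) * Real.Gamma (1-ν) := by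
    rw [← Real.Gamma_add_one (by linarith)]; ring_nf
  have hGp : 0 < Real.Gamma (2-ν) := Real.Gamma_pos_of_pos (by linarith)
  have h7 := mul_le_mul_of_nonneg_left h4 hGp.le
  have htp : 0 < t^(1-ν) := by positivity
  have htt : t = t^(1-ν) * t^ν := by rw [← Real.rpow_add ht]; simp
  refine le_of_mul_le_mul_left ?_ htp
  have h8 : t^(1-ν) * ((1-ν) * (1-a) * (Real.Gamma (1-ν) * t^ν * mlF ν 1 t))
      = Real.Gamma (2-ν) * ((t - a*t) * mlF ν 1 t) := by
    rw [hG]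
    linear_combination (-(1-ν) * (1-a) * Real.Gamma (1-ν) * mlF ν 1 t) * htt
  rw [h8]
  linarith

theorem w_tendsto :
    Tendsto (fun t => Real.Gamma (1-ν) * t^ν * mlF ν 1 t) atTop (nhds 1) := by
  have hu := u_tendsto hν hν1
  rw [tendsto_order]
  constructor
  · intro c hc
    have : Tendsto (fun t => 1 - mlF ν 1 t) atTop (nhds (1 - 0)) := tendsto_const_nhds.sub hu
    rw [sub_zero] at this
    filter_upwards [this.eventually_const_lt hc, eventually_gt_atTop 0] with t h1 h2
    exact h1.trans_le (w_lower hν hν1 h2)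
  · intro c hc
    have hν' : 0 < 1 - ν := by linarith
    -- choose a
    obtain ⟨a, ⟨ha0, ha1⟩, ha⟩ : ∃ a : ℝ, (0 < a ∧ a < 1) ∧ 1 - a^(1-ν) < c * ((1-ν) * (1-a)) := by
      have hd : HasDerivAt (fun x : ℝ => x^(1-ν)) (1-ν) 1 := by
        simpa using Real.hasDerivAt_rpow_const (x := 1) (p := 1-ν) (Or.inl one_ne_zero)
      have hs := (hasDerivAt_iff_tendsto_slope.1 hd).mono_left
        (nhdsWithin_mono 1 (fun x (hx : x ∈ Set.Iio (1:ℝ)) => ne_of_lt hx))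
      have h1 : 1 - ν < c * (1-ν) := by nlinarith
      have e3 : ∀ᶠ τ in nhdsWithin (1:ℝ) (Set.Iio 1), 0 < τ ∧ τ < 1 := Ioo_mem_nhdsLT one_pos
      obtain ⟨a, h2, h3⟩ := ((hs.eventually_lt_const h1).and e3).exists
      refine ⟨a, h3, ?_⟩
      have h4 : 0 < 1 - a := by linarith [h3.2]
      rw [slope_def_field, Real.one_rpow, ← neg_div_neg_eq, neg_sub, neg_sub, div_lt_iff₀ h4] at h2
      linarith
    obtain ⟨e, ⟨he0, he1⟩, he⟩ : ∃ e : ℝ, (0 < e ∧ e < a) ∧ 1 - (a-e)^(1-ν) < c * ((1-ν) * (1-a)) := by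
      have hcn : Continuous (fun e => 1 - (a-e)^(1-ν)) := by
        refine continuous_const.sub ?_
        exact (Real.continuous_rpow_const hν'.le).comp (continuous_const.sub continuous_id)
      have h1 := (hcn.tendsto 0).mono_left (nhdsWithin_le_nhds (s := Set.Ioi 0))
      rw [sub_zero] at h1
      have e3 : ∀ᶠ τ in nhdsWithin (0:ℝ) (Set.Ioi 0), 0 < τ ∧ τ < a := Ioo_mem_nhdsGT ha0
      exact (e3.and (h1.eventually_lt_const ha)).exists
    have hlim : Tendsto (fun t => 1 - (a-e)^(1-ν) * (1 - mlF ν 1 (e*t))) atTop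
        (nhds (1 - (a-e)^(1-ν) * (1 - 0))) := by
      refine tendsto_const_nhds.sub (tendsto_const_nhds.mul (tendsto_const_nhds.sub ?_))
      exact hu.comp (tendsto_id.const_mul_atTop he0)
    rw [sub_zero, mul_one] at hlim
    filter_upwards [hlim.eventually_lt_const he, eventually_gt_atTop 0] with t h1 h2
    have h3 := w_upper hν hν1 he0 he1 ha1 h2
    have h4 : 0 < (1-ν) * (1-a) := mul_pos hν' (by linarith)
    have h5 := h3.trans_lt h1
    rw [mul_comm c] at h5
    exact lt_of_mul_lt_mul_left h5 h4.le

end main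

/-- Ultra-slow (logarithmic) decay of the relaxation response:
`Γ(1−ν) · (log(1+t))^ν · E_ν(−(log(1+t))^ν) → 1` as `t → +∞`; in particular the
relaxation response tends to `0` at infinity. -/
theorem relaxation_ultraslow_decay (ν : ℝ) (hν : ν ∈ Set.Ioo (0:ℝ) 1) :
    Tendsto (fun t : ℝ => Real.Gamma (1 - ν) * (Real.log (1 + t)) ^ ν *
        mittagLeffler ν (-(Real.log (1 + t)) ^ ν)) atTop (nhds 1) ∧
    Tendsto (fun t : ℝ => mittagLeffler ν (-(Real.log (1 + t)) ^ ν))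
      atTop (nhds 0) := by
  have hE : ∀ x : ℝ, mlF ν 1 x = mittagLeffler ν (-x ^ ν) := by
    intro x
    simp [mlF, mlG, mittagLeffler]
  have hlog : Tendsto (fun t : ℝ => Real.log (1 + t)) atTop atTop :=
    Real.tendsto_log_atTop.comp (tendsto_atTop_add_const_left _ 1 tendsto_id)
  have h1 := (w_tendsto hν.1 hν.2).comp hlog
  have h2 := (u_tendsto hν.1 hν.2).comp hlog
  simp only [Function.comp_def, hE] at h1 h2
  exact ⟨h1, h2⟩
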